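/- For n ≥ 2, the order complex Δ(overline{Π}_n) of the partition lattice of [n] with extremes removed has Euler characteristic 1 + (-1)^{n-3}(n-1)!. -/

import Mathlib

instance setoidFinite' (α : Type*) [Finite α] : Finite (Setoid α) :=
  Finite.of_injective (fun c : Setoid α => c.r) (fun a b h => Setoid.ext fun x y => by
    have := congrFun (congrFun h x) y
    exact iff_of_eq this)

noncomputable instance setoidFintype' (α : Type*) [Finite α] : Fintype (Setoid α) :=
  Fintype.ofFinite _

/-- the value of the Möbius function of a partition lattice of rank `k - 1` -/
noncomputable def wgt (k : ℕ) : ℚ := (descPochhammer ℚ k).coeff 1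

lemma wgt_succ (k : ℕ) : wgt (k + 1) = (-1) ^ k * (k.factorial : ℚ) := by
  unfold wgt
  rw [descPochhammer_succ_left, Polynomial.coeff_X_mul, Polynomial.coeff_zero_eq_eval_zero]
  have h := ascPochhammer_eval_neg_eq_descPochhammer ℚ (-1) k
  simp only [neg_neg, ascPochhammer_eval_one] at h
  rw [Polynomial.eval_comp]
  simp only [Polynomial.eval_sub, Polynomial.eval_X, Polynomial.eval_one, zero_sub]
  rw [h, ← mul_assoc, ← mul_pow]
  simp

open Classical in
lemma card_ker_eq {α : Type} [Fintype α] (d : Setoid α) (m : ℕ) :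
    (Finset.univ.filter (fun f : α → Fin m => Setoid.ker f = d)).card
      = m.descFactorial (Nat.card (Quotient d)) := by
  have h := Fintype.card_embedding_eq (α := Quotient d) (β := Fin m)
  rw [Fintype.card_fin, ← Nat.card_eq_fintype_card (α := Quotient d)] at h
  rw [← h, ← Finset.card_univ]
  symm
  refine Finset.card_bij (fun g _ => fun x => g (Quotient.mk d x)) ?_ ?_ ?_
  · intro g _
    simp only [Finset.mem_filter, Finset.mem_univ, true_and]
    ext x y
    rw [Setoid.ker_def, g.injective.eq_iff, Quotient.eq]
  · intro g _ g' _ hg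
    ext q
    induction q using Quotient.inductionOn with
    | h x => exact congrArg _ (congrFun hg x)
  · intro f hf
    simp only [Finset.mem_filter, Finset.mem_univ, true_and] at hf
    subst hf
    exact ⟨⟨Setoid.kerLift f, Setoid.kerLift_injective f⟩, Finset.mem_univ _, rfl⟩

lemma sum_descPochhammer {α : Type} [Fintype α] :
    ∑ d : Setoid α, descPochhammer ℚ (Nat.card (Quotient d)) = Polynomial.X ^ (Nat.card α) := by
  classical
  apply Polynomial.eq_of_infinite_eval_eq
  refine (Set.infinite_range_of_injective (Nat.cast_injective (R := ℚ))).mono ?_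
  rintro _ ⟨m, rfl⟩
  simp only [Set.mem_setOf_eq, Polynomial.eval_finset_sum, descPochhammer_eval_eq_descFactorial,
    Polynomial.eval_pow, Polynomial.eval_X]
  have h := Finset.card_eq_sum_card_fiberwise (f := fun f : α → Fin m => Setoid.ker f)
    (s := Finset.univ) (t := Finset.univ) (fun _ _ => Finset.mem_coe.2 (Finset.mem_univ _))
  simp only [card_ker_eq] at h
  rw [Finset.card_univ, Fintype.card_fun, Fintype.card_fin, ← Nat.card_eq_fintype_card] at h
  exact_mod_cast h.symm

lemma sum_wgt {α : Type} [Fintype α] (h : 2 ≤ Nat.card α) :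
    ∑ d : Setoid α, wgt (Nat.card (Quotient d)) = 0 := by
  have := congrArg (fun p => Polynomial.coeff p 1) (sum_descPochhammer (α := α))
  simp only [Polynomial.finset_sum_coeff, Polynomial.coeff_X_pow] at this
  unfold wgt
  rw [this, if_neg (by omega)]

lemma card_quot_comap {α : Type} (c : Setoid α) (e : Setoid (Quotient c)) :
    Nat.card (Quotient (Setoid.comap (Quotient.mk c) e)) = Nat.card (Quotient e) := by
  refine Nat.card_congr (Equiv.ofBijective
    (Quotient.map' (Quotient.mk c) (fun _ _ h => h)) ⟨?_, ?_⟩)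
  · intro a b
    induction a using Quotient.inductionOn
    induction b using Quotient.inductionOn
    intro h
    have h' := Quotient.exact (s := e) h
    exact Quotient.sound h'
  · intro q
    induction q using Quotient.inductionOn with
    | h x =>
      induction x using Quotient.inductionOn with
      | h y => exact ⟨Quotient.mk _ y, rfl⟩

open Classical in
lemma sum_wgt_ge {α : Type} [Fintype α] (c : Setoid α) (h : 2 ≤ Nat.card (Quotient c)) :
    ∑ d ∈ Finset.univ.filter (fun d => c ≤ d), wgt (Nat.card (Quotient d)) = 0 := by
  rw [← sum_wgt (α := Quotient c) h]
  symm
  refine Finset.sum_bij (fun e _ => Setoid.comap (Quotient.mk c) e) ?_ ?_ ?_ ?_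
  · intro e _
    simp only [Finset.mem_filter, Finset.mem_univ, true_and]
    intro x y hxy
    have : Quotient.mk c x = Quotient.mk c y := Quotient.sound hxy
    rw [Setoid.comap_rel, this]
  · intro e _ e' _ he
    ext x y
    induction x using Quotient.inductionOn
    induction y using Quotient.inductionOn
    exact Setoid.ext_iff.1 he _ _
  · intro d hd
    simp only [Finset.mem_filter, Finset.mem_univ, true_and] at hd
    refine ⟨Setoid.ker (Setoid.map_of_le hd), Finset.mem_univ _, ?_⟩
    ext x y
    rw [Setoid.comap_rel, Setoid.ker_def]
    exact Quotient.eq (r := d)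
  · intro e _
    rw [card_quot_comap]

lemma card_quot_lt {α : Type} [Finite α] {c d : Setoid α} (h : c < d) :
    Nat.card (Quotient d) < Nat.card (Quotient c) := by
  have hs : Function.Surjective (Setoid.map_of_le h.le) := by
    intro q
    induction q using Quotient.inductionOn with
    | h x => exact ⟨Quotient.mk _ x, rfl⟩
  refine lt_of_le_of_ne (Nat.card_le_card_of_surjective _ hs) fun he => h.not_ge ?_
  have hb := (Nat.bijective_iff_surjective_and_card _).2 ⟨hs, he.symm⟩
  intro x y hxy
  have : Setoid.map_of_le h.le (Quotient.mk c x) = Setoid.map_of_le h.le (Quotient.mk c y) :=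
    Quotient.sound hxy
  exact Quotient.exact (hb.1 this)

lemma two_le_card_quot {α : Type} [Finite α] [Nonempty α] {c : Setoid α} (h : c ≠ ⊤) :
    2 ≤ Nat.card (Quotient c) := by
  have : Nonempty (Quotient (⊤ : Setoid α)) := (inferInstance : Nonempty α).map (Quotient.mk _)
  have := card_quot_lt (lt_top_iff_ne_top.2 h)
  have : 0 < Nat.card (Quotient (⊤ : Setoid α)) := Nat.card_pos
  omega

lemma card_quot_top {α : Type} [Nonempty α] : Nat.card (Quotient (⊤ : Setoid α)) = 1 := by
  rw [Nat.card_eq_one_iff_unique]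
  refine ⟨⟨fun a b => ?_⟩, (inferInstance : Nonempty α).map (Quotient.mk _)⟩
  induction a using Quotient.inductionOn
  induction b using Quotient.inductionOn
  exact Quotient.sound trivial

open Classical in
/-- chains in the open interval from `c` to the top -/
noncomputable def chainsAbove {L : Type*} [PartialOrder L] [OrderTop L] [Fintype L] (c : L) :
    Finset (Finset L) :=
  Finset.univ.filter fun s => IsChain (· ≤ ·) (s : Set L) ∧ ∀ x ∈ s, c < x ∧ x < ⊤

lemma mem_chainsAbove {L : Type*} [PartialOrder L] [OrderTop L] [Fintype L] {c : L}
    {s : Finset L} : s ∈ chainsAbove c ↔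
      IsChain (· ≤ ·) (s : Set L) ∧ ∀ x ∈ s, c < x ∧ x < ⊤ := by
  simp [chainsAbove]

open Classical in
lemma chainsAbove_eq {L : Type*} [PartialOrder L] [OrderTop L] [Fintype L] (c : L) :
    chainsAbove c = insert ∅ ((Finset.univ.filter fun d => c < d ∧ d < ⊤).biUnion
      fun d => (chainsAbove d).image (insert d)) := by
  ext s
  simp only [Finset.mem_insert, Finset.mem_biUnion, Finset.mem_filter, Finset.mem_univ, true_and,
    Finset.mem_image, mem_chainsAbove]
  constructor
  · rintro ⟨hs, hb⟩
    rcases s.eq_empty_or_nonempty with h | h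
    · exact Or.inl h
    · right
      obtain ⟨d, hd, hmin⟩ := Finset.exists_minimal h
      refine ⟨d, hb d hd, s.erase d, ⟨hs.mono (by simp), ?_⟩, Finset.insert_erase hd⟩
      intro x hx
      obtain ⟨hxd, hxs⟩ := Finset.mem_erase.1 hx
      refine ⟨lt_of_le_of_ne ?_ hxd.symm, (hb x hxs).2⟩
      rcases hs.total hd hxs with h1 | h1
      · exact h1
      · exact hmin hxs h1
  · rintro (rfl | ⟨d, hd, t, ⟨ht, hb⟩, rfl⟩)
    · simp
    · refine ⟨?_, ?_⟩
      · rw [Finset.coe_insert]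
        exact ht.insert fun b hbt _ => Or.inl (hb b hbt).1.le
      · intro x hx
        rcases Finset.mem_insert.1 hx with rfl | hx
        · exact hd
        · exact ⟨hd.1.trans (hb x hx).1, (hb x hx).2⟩

open Classical in
lemma sum_chainsAbove {L : Type*} [PartialOrder L] [OrderTop L] [Fintype L] (c : L) :
    ∑ s ∈ chainsAbove c, (-1 : ℚ) ^ s.card = 1 - ∑ d ∈ Finset.univ.filter (fun d => c < d ∧ d < ⊤),
      ∑ s ∈ chainsAbove d, (-1 : ℚ) ^ s.card := by
  have hn : ∀ (d : L) (s), s ∈ chainsAbove d → d ∉ s := fun d s hs hd =>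
    lt_irrefl _ ((mem_chainsAbove.1 hs).2 d hd).1
  rw [chainsAbove_eq, Finset.sum_insert (by simp), Finset.sum_biUnion, sub_eq_add_neg]
  · congr 1
    · rw [← Finset.sum_neg_distrib]
      refine Finset.sum_congr rfl fun d _ => ?_
      rw [Finset.sum_image, ← Finset.sum_neg_distrib]
      · refine Finset.sum_congr rfl fun s hs => ?_
        rw [Finset.card_insert_of_notMem (hn d s hs), pow_succ]
        ring
      · intro s hs t ht hst
        rw [← Finset.erase_insert (hn d s hs), ← Finset.erase_insert (hn d t ht), hst]
  · intro d _ e _ hde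
    rw [Function.onFun, Finset.disjoint_left]
    intro s hs ht
    obtain ⟨s, hs', rfl⟩ := Finset.mem_image.1 hs
    obtain ⟨t, ht, hst⟩ := Finset.mem_image.1 ht
    have h1 : d ∈ insert e t := hst ▸ Finset.mem_insert_self d s
    have h2 : e ∈ insert d s := hst ▸ Finset.mem_insert_self e t
    have h3 := ((mem_chainsAbove.1 ht).2 d ((Finset.mem_insert.1 h1).resolve_left hde)).1
    have h4 := ((mem_chainsAbove.1 hs').2 e ((Finset.mem_insert.1 h2).resolve_left (Ne.symm hde))).1
    exact lt_asymm h3 h4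

open Classical in
lemma hall {L : Type*} [PartialOrder L] [OrderTop L] [Fintype L] (M : L → ℚ) (h1 : M ⊤ = 1)
    (h : ∀ c, c ≠ ⊤ → ∑ d ∈ Finset.univ.filter (fun d => c ≤ d), M d = 0) (c : L) (hc : c ≠ ⊤) :
    ∑ s ∈ chainsAbove c, (-1 : ℚ) ^ s.card = - M c := by
  induction c using WellFoundedGT.induction with
  | ind c ih =>
    have h2 := h c hc
    have h3 : Finset.univ.filter (fun d => c ≤ d) =
        insert c (insert ⊤ (Finset.univ.filter (fun d => c < d ∧ d < ⊤))) := by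
      ext d
      simp only [Finset.mem_filter, Finset.mem_univ, true_and, Finset.mem_insert]
      constructor
      · intro hd
        by_cases h5 : d = ⊤
        · exact Or.inr (Or.inl h5)
        · rcases hd.eq_or_lt with h6 | h6
          · exact Or.inl h6.symm
          · exact Or.inr (Or.inr ⟨h6, lt_top_iff_ne_top.2 h5⟩)
      · rintro (rfl | rfl | h)
        · exact le_rfl
        · exact le_top
        · exact h.1.le
    rw [h3, Finset.sum_insert (by simp [hc]), Finset.sum_insert (by simp), h1] at h2
    rw [sum_chainsAbove, Finset.sum_congr rfl (g := fun d => - M d), Finset.sum_neg_distrib]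
    · linarith
    · intro d hd
      simp only [Finset.mem_filter, Finset.mem_univ, true_and] at hd
      exact ih d hd.1 hd.2.ne

/-- For `n ≥ 2`, the order complex `Δ(overline{Π}_n)` of the partition lattice of
`{1,…,n}` (partitions encoded as setoids) with the extremes removed has Euler
characteristic `1 + (-1)^{n-3}·(n-1)!`.  The `m`-dimensional simplices of the order
complex are the chains of cardinality `m + 1` in the poset, and the (integer) exponent
`n - 3` forces us to state the identity in `ℚ`. -/
theorem euler_char_orderComplex_partition_lattice (n : ℕ) (hn : 2 ≤ n) :
    ∑ m ∈ Finset.range (n + 1), (-1 : ℚ) ^ m *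
        ({s : Finset {c : Setoid (Fin n) // c ≠ ⊥ ∧ c ≠ ⊤} |
            s.card = m + 1 ∧ IsChain (· ≤ ·) (s : Set {c : Setoid (Fin n) // c ≠ ⊥ ∧ c ≠ ⊤})}.ncard : ℚ) =
      1 + (-1 : ℚ) ^ ((n : ℤ) - 3) * ((n - 1).factorial : ℚ) := by
  classical
  obtain ⟨k, rfl⟩ : ∃ k, n = k + 2 := ⟨n - 2, by omega⟩
  set P := {c : Setoid (Fin (k + 2)) // c ≠ ⊥ ∧ c ≠ ⊤} with hP
  letI : Fintype P := Fintype.ofFinite _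
  have hbt : (⊥ : Setoid (Fin (k + 2))) ≠ ⊤ := by
    intro h
    have h1 : (⊥ : Setoid (Fin (k + 2))) 0 1 := by rw [h]; trivial
    have h2 : (0 : Fin (k + 2)) = 1 := h1
    simp at h2
  have hbot : Nat.card (Quotient (⊥ : Setoid (Fin (k + 2)))) = k + 2 := by
    rw [Nat.card_congr (Equiv.ofBijective (Quotient.mk (⊥ : Setoid (Fin (k + 2))))
      ⟨fun a b h => Quotient.exact h, Quotient.mk_surjective⟩).symm, Nat.card_fin]
  have hM := hall (L := Setoid (Fin (k + 2))) (fun c => wgt (Nat.card (Quotient c)))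
    (by rw [card_quot_top]; simpa using wgt_succ 0)
    (fun c hc => sum_wgt_ge c (two_le_card_quot hc)) ⊥ hbt
  rw [hbot, wgt_succ] at hM
  -- translate to chains of the subtype
  have hT : ∑ s ∈ chainsAbove (⊥ : Setoid (Fin (k + 2))), (-1 : ℚ) ^ s.card =
      ∑ s ∈ Finset.univ.filter (fun s : Finset P => IsChain (· ≤ ·) (s : Set P)),
        (-1 : ℚ) ^ s.card := by
    symm
    refine Finset.sum_bij (fun s _ => s.map (Function.Embedding.subtype _)) ?_ ?_ ?_ ?_
    · intro s hs
      simp only [Finset.mem_filter, Finset.mem_univ, true_and] at hs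
      rw [mem_chainsAbove]
      refine ⟨?_, ?_⟩
      · rw [Finset.coe_map]
        rintro _ ⟨a, ha, rfl⟩ _ ⟨b, hb, rfl⟩ hab
        exact hs ha hb (fun h => hab (by rw [h]))
      · intro x hx
        obtain ⟨a, ha, rfl⟩ := Finset.mem_map.1 hx
        exact ⟨bot_lt_iff_ne_bot.2 a.2.1, lt_top_iff_ne_top.2 a.2.2⟩
    · intro s _ t _ h
      exact Finset.map_injective _ h
    · intro s hs
      rw [mem_chainsAbove] at hs
      refine ⟨s.subtype _, ?_, Finset.subtype_map_of_mem fun x hx =>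
        ⟨(hs.2 x hx).1.ne', (hs.2 x hx).2.ne⟩⟩
      simp only [Finset.mem_filter, Finset.mem_univ, true_and]
      intro a ha b hb hab
      exact hs.1 (Finset.mem_subtype.1 ha) (Finset.mem_subtype.1 hb)
        (fun h => hab (Subtype.ext h))
    · intro s _
      rw [Finset.card_map]
  rw [hT] at hM
  have hcard : ∀ s : Finset P, IsChain (· ≤ ·) (s : Set P) → s.card < k + 2 + 2 := by
    intro s hs
    have : s.card ≤ (Finset.range (k + 2 + 1)).card := by
      refine Finset.card_le_card_of_injOn (fun c => Nat.card (Quotient c.1)) ?_ ?_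
      · intro c _
        simp only [Finset.coe_range, Set.mem_Iio]
        have := card_quot_lt (bot_lt_iff_ne_bot.2 c.2.1)
        omega
      · intro a ha b hb hab
        by_contra hne
        have hne' : a.1 ≠ b.1 := fun h => hne (Subtype.ext h)
        simp only at hab
        rcases hs.total ha hb with h | h
        · have := card_quot_lt (lt_of_le_of_ne (show a.1 ≤ b.1 from h) hne')
          omega
        · have := card_quot_lt (lt_of_le_of_ne (show b.1 ≤ a.1 from h) hne'.symm)
          omega
    rw [Finset.card_range] at this
    omega
  have hN : ∀ m, ({s : Finset P | s.card = m ∧ IsChain (· ≤ ·) (s : Set P)}.ncard : ℚ) =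
      (((Finset.univ.filter (fun s : Finset P => IsChain (· ≤ ·) (s : Set P))).filter
        (fun s => s.card = m)).card : ℚ) := by
    intro m
    rw [← Set.ncard_coe_finset]
    congr 2
    ext s
    simp [and_comm]
  have hsplit : ∑ s ∈ Finset.univ.filter (fun s : Finset P => IsChain (· ≤ ·) (s : Set P)),
      (-1 : ℚ) ^ s.card = ∑ m ∈ Finset.range (k + 2 + 2), (-1 : ℚ) ^ m *
        ({s : Finset P | s.card = m ∧ IsChain (· ≤ ·) (s : Set P)}.ncard : ℚ) := by
    rw [← Finset.sum_fiberwise_of_maps_to (t := Finset.range (k + 2 + 2)) (g := Finset.card)]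
    · refine Finset.sum_congr rfl fun m _ => ?_
      rw [hN, Finset.sum_congr rfl (g := fun _ => (-1 : ℚ) ^ m)]
      · rw [Finset.sum_const, nsmul_eq_mul, mul_comm]
      · intro s hs
        rw [(Finset.mem_filter.1 hs).2]
    · intro s hs
      exact Finset.mem_range.2 (hcard s (Finset.mem_filter.1 hs).2)
  rw [hsplit, Finset.sum_range_succ'] at hM
  have h0 : ({s : Finset P | s.card = 0 ∧ IsChain (· ≤ ·) (s : Set P)}.ncard : ℚ) = 1 := by
    have : {s : Finset P | s.card = 0 ∧ IsChain (· ≤ ·) (s : Set P)} = {∅} := by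
      ext s
      simp only [Set.mem_setOf_eq, Finset.card_eq_zero, Set.mem_singleton_iff]
      constructor
      · exact fun h => h.1
      · rintro rfl
        simp
    rw [this]
    simp
  rw [h0] at hM
  have hexp : (-1 : ℚ) ^ (((k + 2 : ℕ) : ℤ) - 3) = (-1) ^ (k + 1) := by
    rw [show (((k + 2 : ℕ) : ℤ) - 3) = ((k + 1 : ℕ) : ℤ) - 2 by push_cast; ring,
      zpow_sub₀ (by norm_num), zpow_natCast]
    norm_num
  rw [hexp, show k + 2 - 1 = k + 1 from rfl]
  have hneg : ∀ f : ℕ → ℚ, ∑ m ∈ Finset.range (k + 2 + 1), (-1 : ℚ) ^ (m + 1) * f m =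
      - ∑ m ∈ Finset.range (k + 2 + 1), (-1 : ℚ) ^ m * f m := by
    intro f
    rw [← Finset.sum_neg_distrib]
    exact Finset.sum_congr rfl fun m _ => by rw [pow_succ]; ring
  rw [hneg (fun m =>
    ({s : Finset P | s.card = m + 1 ∧ IsChain (· ≤ ·) (s : Set P)}.ncard : ℚ))] at hM
  linarith
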